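/- arXiv:2008.13128 — 15 statements merged into one kernel-verified Lean document; each statement's English description precedes it below -/
import Mathlib

section
/- Let A and K be natural numbers with A ≥ 1 and K ≥ 1, let t and b be real numbers with t > 0, and let T and B be integers with T > 0. Then the following are equivalent: (i) for every integer N, clip(⌊(N + b)/t⌋, 0, A) = clip(⌊(N·K + B)/T⌋, 0, A); (ii) for every i ∈ {1, …, A}, ⌈i·t − b⌉ = ⌈(i·T − B)/K⌉. -/
/-- Equivalence between the clipped floor formulation and the
ceiling condition, for `A, K ≥ 1`, `t > 0`, `T > 0`.
`clip x a b = min (max x a) b`. -/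
theorem stmt_0 (A K : ℕ) (hA : 1 ≤ A) (hK : 1 ≤ K) (t b : ℝ) (ht : 0 < t)
    (T B : ℤ) (hT : 0 < T) :
    (∀ N : ℤ, min (max (⌊((N : ℝ) + b) / t⌋) 0) (A : ℤ)
        = min (max (⌊((N : ℝ) * (K : ℝ) + (B : ℝ)) / (T : ℝ)⌋) 0) (A : ℤ)) ↔
    (∀ i : ℕ, 1 ≤ i → i ≤ A →
        ⌈(i : ℝ) * t - b⌉ = ⌈((i : ℝ) * (T : ℝ) - (B : ℝ)) / (K : ℝ)⌉) := by
  have hK' : (0:ℝ) < K := by exact_mod_cast hK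
  have hT' : (0:ℝ) < T := by exact_mod_cast hT
  have h1 : ∀ (i : ℕ) (N : ℤ), (i : ℤ) ≤ ⌊((N : ℝ) + b) / t⌋ ↔ ⌈(i : ℝ) * t - b⌉ ≤ N := by
    intro i N
    rw [Int.le_floor, Int.ceil_le, le_div_iff₀ ht, Int.cast_natCast, sub_le_iff_le_add]
  have h2 : ∀ (i : ℕ) (N : ℤ), (i : ℤ) ≤ ⌊((N : ℝ) * (K : ℝ) + (B : ℝ)) / (T : ℝ)⌋ ↔
      ⌈((i : ℝ) * (T : ℝ) - (B : ℝ)) / (K : ℝ)⌉ ≤ N := by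
    intro i N
    rw [Int.le_floor, Int.ceil_le, le_div_iff₀ hT', Int.cast_natCast, div_le_iff₀ hK',
      sub_le_iff_le_add]
  constructor
  · intro h i hi hiA
    apply eq_of_forall_ge_iff
    intro N
    rw [← h1, ← h2]
    have := h N
    omega
  · intro h N
    have key : ∀ i : ℕ, 1 ≤ i → i ≤ A → ((i : ℤ) ≤ ⌊((N : ℝ) + b) / t⌋ ↔
        (i : ℤ) ≤ ⌊((N : ℝ) * (K : ℝ) + (B : ℝ)) / (T : ℝ)⌋) := by
      intro i hi hiA
      rw [h1, h2, h i hi hiA]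
    generalize ⌊((N : ℝ) + b) / t⌋ = x at key ⊢
    generalize ⌊((N : ℝ) * (K : ℝ) + (B : ℝ)) / (T : ℝ)⌋ = y at key ⊢
    have k1 := key (min (max x 0) (A : ℤ)).toNat
    have k2 := key (min (max y 0) (A : ℤ)).toNat
    omega
end

section
/- For every natural number n ≥ 1 there exists a natural number K ≥ 1 that is n-admissible. -/
open Filter Topology in
lemma rat_approx (n : ℕ) (t b : ℝ) : ∃ q r : ℚ, ∀ i ∈ Finset.range (n+1),
    ⌈(i : ℝ) * t - b⌉ = ⌈(i : ℝ) * (q : ℝ) - (r : ℝ)⌉ := by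
  have h1 : ∀ᶠ b' in 𝓝[>] b, ∀ i ∈ Finset.range (n+1),
      ((⌈(i : ℝ) * t - b⌉ : ℝ) - 1 < (i : ℝ) * t - b' ∧ (i : ℝ) * t - b' < ⌈(i : ℝ) * t - b⌉) := by
    rw [Filter.eventually_all_finset]
    intro i _
    have h2 : ∀ᶠ b' in 𝓝 b, (⌈(i : ℝ) * t - b⌉ : ℝ) - 1 < (i : ℝ) * t - b' := by
      have hc : ContinuousAt (fun b' : ℝ => (i : ℝ) * t - b') b := by fun_prop
      apply hc.eventually_const_lt
      linarith [Int.ceil_lt_add_one ((i : ℝ) * t - b)]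
    filter_upwards [h2.filter_mono nhdsWithin_le_nhds, self_mem_nhdsWithin] with b' h3 h4
    refine ⟨h3, ?_⟩
    have : b < b' := h4
    linarith [Int.le_ceil ((i : ℝ) * t - b)]
  obtain ⟨b', hb'⟩ := h1.exists
  have h5 : ∀ᶠ x : ℝ × ℝ in 𝓝 (t, b'), ∀ i ∈ Finset.range (n+1),
      ((⌈(i : ℝ) * t - b⌉ : ℝ) - 1 < (i : ℝ) * x.1 - x.2 ∧
        (i : ℝ) * x.1 - x.2 < ⌈(i : ℝ) * t - b⌉) := by
    rw [Filter.eventually_all_finset]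
    intro i hi
    have hc : ContinuousAt (fun x : ℝ × ℝ => (i : ℝ) * x.1 - x.2) (t, b') := by fun_prop
    exact (hc.eventually_const_lt (hb' i hi).1).and (hc.eventually_lt_const (hb' i hi).2)
  have hd : DenseRange (Prod.map ((↑) : ℚ → ℝ) ((↑) : ℚ → ℝ)) :=
    (Rat.denseRange_cast (𝕜 := ℝ)).prodMap (Rat.denseRange_cast (𝕜 := ℝ))
  obtain ⟨⟨_, _⟩, ⟨⟨q, r⟩, hqr⟩, hx⟩ := hd.inter_nhds_nonempty h5
  simp only [Prod.map_apply, Prod.mk.injEq] at hqr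
  obtain ⟨rfl, rfl⟩ := hqr
  refine ⟨q, r, fun i hi => ?_⟩
  have := hx i hi
  symm
  rw [Int.ceil_eq_iff]
  exact ⟨this.1, this.2.le⟩

def PatOK (n : ℕ) (p : Fin (n+1) → ℤ) (K : ℕ) : Prop :=
  1 ≤ K ∧ ∃ T B : ℤ, ∀ i : Fin (n+1), p i = ⌈(((i : ℕ) : ℝ) * (T : ℝ) - (B : ℝ)) / (K : ℝ)⌉

lemma PatOK.dvd {n : ℕ} {p : Fin (n+1) → ℤ} {K L : ℕ} (h : PatOK n p K) (hL : 1 ≤ L)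
    (hd : K ∣ L) : PatOK n p L := by
  obtain ⟨hK, T, B, hT⟩ := h
  obtain ⟨m, rfl⟩ := hd
  have hm : (m : ℝ) ≠ 0 := by
    rintro h0
    have : m = 0 := by exact_mod_cast h0
    subst this; simp at hL
  have hK' : (K : ℝ) ≠ 0 := by
    have : K ≠ 0 := by omega
    exact_mod_cast this
  refine ⟨hL, T * m, B * m, fun i => ?_⟩
  rw [hT i]
  congr 1
  push_cast
  field_simp

lemma patOK_exists (n : ℕ) (t b : ℝ) :
    ∃ K, PatOK n (fun i => ⌈((i : ℕ) : ℝ) * t - b⌉) K := by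
  obtain ⟨q, r, h⟩ := rat_approx n t b
  refine ⟨q.den * r.den, Nat.mul_pos q.pos r.pos, q.num * r.den, r.num * q.den, fun i => ?_⟩
  show ⌈((i : ℕ) : ℝ) * t - b⌉ = _
  rw [h i (Finset.mem_range.mpr i.2)]
  congr 1
  have hq : (q.den : ℝ) ≠ 0 := by exact_mod_cast q.den_nz
  have hr : (r.den : ℝ) ≠ 0 := by exact_mod_cast r.den_nz
  rw [Rat.cast_def q, Rat.cast_def r]
  push_cast
  field_simp

/-- For every `n ≥ 1` there exists an `n`-admissible `K ≥ 1`. -/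
theorem stmt_1 (n : ℕ) (hn : 1 ≤ n) :
    ∃ K : ℕ, 1 ≤ K ∧
      ∀ t b : ℝ, ∃ T B : ℤ, ∀ i : ℕ, 1 ≤ i → i ≤ n →
        ⌈(i : ℝ) * t - b⌉ = ⌈((i : ℝ) * (T : ℝ) - (B : ℝ)) / (K : ℝ)⌉ := by
  have hk : ∀ p : Fin (n+1) → ℤ, ∃ k : ℕ, 1 ≤ k ∧ ((∃ K, PatOK n p K) → PatOK n p k) := by
    intro p
    by_cases h : ∃ K, PatOK n p K
    · obtain ⟨K, hK⟩ := h
      exact ⟨K, hK.1, fun _ => hK⟩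
    · exact ⟨1, le_rfl, fun h' => absurd h' h⟩
  choose k hk1 hk2 using hk
  let F : Finset (Fin (n+1) → ℤ) := Finset.Icc (fun _ => -1) (fun _ => (n : ℤ))
  have hpos : 1 ≤ ∏ p ∈ F, k p :=
    Nat.succ_le_of_lt (Finset.prod_pos (fun p _ => Nat.lt_of_succ_le (hk1 p)))
  refine ⟨∏ p ∈ F, k p, hpos, fun t b => ?_⟩
  have hF : (fun i : Fin (n+1) => ⌈((i : ℕ) : ℝ) * Int.fract t - Int.fract b⌉) ∈ F := by
    rw [Finset.mem_Icc]
    have b0 := Int.fract_nonneg b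
    have b1 := Int.fract_lt_one b
    have t0 := Int.fract_nonneg t
    have t1 := Int.fract_lt_one t
    constructor
    · intro i
      show (-1 : ℤ) ≤ ⌈_⌉
      have : (0:ℝ) ≤ ((i : ℕ) : ℝ) * Int.fract t := by positivity
      have h2 := Int.le_ceil (((i : ℕ) : ℝ) * Int.fract t - Int.fract b)
      have : (-1 : ℝ) ≤ (⌈((i : ℕ) : ℝ) * Int.fract t - Int.fract b⌉ : ℝ) := by linarith
      exact_mod_cast this
    · intro i
      show ⌈_⌉ ≤ (n : ℤ)
      rw [Int.ceil_le]
      have hi : ((i : ℕ) : ℝ) ≤ n := by exact_mod_cast Nat.lt_succ_iff.mp i.2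
      have h0 : (0:ℝ) ≤ ((i : ℕ) : ℝ) := by positivity
      push_cast
      nlinarith
  obtain ⟨-, T, B, h⟩ := (hk2 _ (patOK_exists n (Int.fract t) (Int.fract b))).dvd hpos
    (Finset.dvd_prod_of_mem k hF)
  generalize (∏ p ∈ F, k p) = K at *
  have hK' : (K : ℝ) ≠ 0 := by
    have : K ≠ 0 := by omega
    exact_mod_cast this
  refine ⟨T + K * ⌊t⌋, B + K * ⌊b⌋, fun i _ hi => ?_⟩
  have h3 := h ⟨i, by omega⟩
  simp only at h3
  have e1 : (i : ℝ) * t - b = ((i : ℝ) * Int.fract t - Int.fract b) + ((i * ⌊t⌋ - ⌊b⌋ : ℤ) : ℝ) := by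
    unfold Int.fract
    push_cast
    ring
  have e2 : ((i : ℝ) * ((T + K * ⌊t⌋ : ℤ) : ℝ) - ((B + K * ⌊b⌋ : ℤ) : ℝ)) / (K : ℝ)
      = ((i : ℝ) * (T : ℝ) - (B : ℝ)) / (K : ℝ) + ((i * ⌊t⌋ - ⌊b⌋ : ℤ) : ℝ) := by
    push_cast
    field_simp
    ring
  rw [e1, e2, Int.ceil_add_intCast, Int.ceil_add_intCast, h3]
end

section
/- Let n be a natural number with n > 4. Then every natural number K with 2·K > (n − 1)·(n − 3) is n-admissible. Consequently, the least n-admissible K is at most (n − 1)·(n − 3)/2 + 1. -/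
/-- `K` is `n`-admissible: for all real `t, b` there exist integers `T, B` with
`⌈i·t − b⌉ = ⌈(i·T − B)/K⌉` for every `i ∈ {1, …, n}`. -/
def NAdmissible (n K : ℕ) : Prop :=
  ∀ t b : ℝ, ∃ T B : ℤ, ∀ i : ℕ, 1 ≤ i → i ≤ n →
    ⌈(i : ℝ) * t - b⌉ = ⌈((i : ℝ) * (T : ℝ) - (B : ℝ)) / (K : ℝ)⌉

theorem core_det_one (a : ℤ → ℤ) (t b : ℝ) (ha1 : ∀ i : ℤ, (i:ℝ) * t - b ≤ a i)
    (ha2 : ∀ i : ℤ, (a i : ℝ) < (i:ℝ) * t - b + 1) (n i j s q r p : ℤ)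
    (hi : 1 ≤ i) (his : i + s ≤ n) (hj : 1 ≤ j) (hjq : j + q ≤ n) (hs : 0 < s) (hq : 0 < q)
    (hr : a (i + s) - a i = r + 1) (hp : a (j + q) - a j = p - 1)
    (hdet : p * s - q * r = 1) : q + s ≤ n - 1 := by
  by_contra hcon
  have e1 := ha1 i
  have e2 := ha2 i
  have e3 := ha1 j
  have e4 := ha2 j
  have e5 := ha1 (i+s)
  have e6 := ha2 (i+s)
  have e7 := ha1 (j+q)
  have e8 := ha2 (j+q)
  have hr' : (a (i+s) : ℝ) = a i + r + 1 := by
    have : a (i+s) = a i + r + 1 := by omega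
    exact_mod_cast this
  have hp' : (a (j+q) : ℝ) = a j + p - 1 := by
    have : a (j+q) = a j + p - 1 := by omega
    exact_mod_cast this
  rw [hr'] at e5 e6
  rw [hp'] at e7 e8
  push_cast at e5 e6 e7 e8
  obtain ⟨x, hx⟩ : ∃ x : ℤ, x = (i - j) * p - (a i - a j + 1) * q := ⟨_, rfl⟩
  obtain ⟨y, hy⟩ : ∃ y : ℤ, y = s * (a i - a j + 1) - r * (i - j) := ⟨_, rfl⟩
  have hD : i - j = x * s + y * q := by
    rw [hx, hy]; linear_combination (-(i - j)) * hdet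
  have hA : a i - a j + 1 = x * r + y * p := by
    rw [hx, hy]; linear_combination (-(a i - a j + 1)) * hdet
  have hα : 0 < (s:ℝ) * t - r := by nlinarith
  have hβ : 0 < (p:ℝ) - q * t := by nlinarith
  have hD' : (i:ℝ) - j = x * s + y * q := by exact_mod_cast hD
  have hA' : (a i:ℝ) - a j + 1 = x * r + y * p := by exact_mod_cast hA
  have hv : (a i:ℝ) - a j + 1 - (i - j) * t = -x * (s * t - r) + y * (p - q * t) := by
    rw [hD', hA']; ring
  have v0 : 0 < -(x:ℝ) * (s * t - r) + y * (p - q * t) := by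
    rw [← hv]; nlinarith
  have v1 : -(x:ℝ) * (s * t - r) + y * (p - q * t) < (s * t - r) + (p - q * t) := by
    rw [← hv]; nlinarith
  rcases le_or_gt 1 y with hy1 | hy1
  · rcases le_or_gt 0 x with hx0 | hx0
    · have : 0 ≤ x * s := by positivity
      have : q ≤ y * q := by nlinarith
      omega
    · have hxr : (1:ℝ) ≤ -x := by
        have : (1:ℤ) ≤ -x := by omega
        exact_mod_cast this
      have hyr : (1:ℝ) ≤ y := by exact_mod_cast hy1
      nlinarith
  · rcases le_or_gt 0 x with hx0 | hx0
    · have hxr : (0:ℝ) ≤ x := by exact_mod_cast hx0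
      have hyr : (y:ℝ) ≤ 0 := by
        have : y ≤ 0 := by omega
        exact_mod_cast this
      nlinarith
    · have : x * s ≤ -s := by nlinarith
      have : y * q ≤ 0 := by nlinarith
      omega

theorem key_bound (a : ℤ → ℤ) (t b : ℝ) (ha1 : ∀ i : ℤ, (i:ℝ) * t - b ≤ a i)
    (ha2 : ∀ i : ℤ, (a i : ℝ) < (i:ℝ) * t - b + 1) (n K i j s q r p : ℤ) (hn : 4 < n)
    (hK : (n - 1) * (n - 3) < 2 * K)
    (hi : 1 ≤ i) (his : i + s ≤ n) (hj : 1 ≤ j) (hjq : j + q ≤ n) (hs : 0 < s) (hq : 0 < q)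
    (hr : a (i + s) - a i = r + 1) (hp : a (j + q) - a j = p - 1) :
    q * s < K * (p * s - q * r) := by
  have hα : 0 < (s:ℝ) * t - r := by
    have e2 := ha1 i
    have e6 := ha2 (i+s)
    have : (a (i+s) : ℝ) = a i + r + 1 := by
      have : a (i+s) = a i + r + 1 := by omega
      exact_mod_cast this
    rw [this] at e6; push_cast at e6
    linarith
  have hβ : 0 < (p:ℝ) - q * t := by
    have e2 := ha2 j
    have e6 := ha1 (j+q)
    have : (a (j+q) : ℝ) = a j + p - 1 := by
      have : a (j+q) = a j + p - 1 := by omega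
      exact_mod_cast this
    rw [this] at e6; push_cast at e6
    linarith
  have hdet : 0 < p * s - q * r := by
    have hs' : (0:ℝ) < s := by exact_mod_cast hs
    have hq' : (0:ℝ) < q := by exact_mod_cast hq
    have h : (0:ℝ) < p * s - q * r := by nlinarith [mul_pos hα hq', mul_pos hβ hs']
    exact_mod_cast h
  have hKn : n - 1 < K := by nlinarith
  have hsn : s ≤ n - 1 := by omega
  have hqn : q ≤ n - 1 := by omega
  by_cases hqs : q = s
  · subst hqs
    have h0 : 0 < q * (p - r) := by linarith
    have h1 : 0 < p - r := by
      by_contra h; nlinarith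
    have h2 : q ≤ q * (p - r) := by nlinarith
    have h3 : p * q - q * r = q * (p - r) := by ring
    rw [h3]
    nlinarith
  have hprod : q * s ≤ (n - 1) * (n - 2) := by
    rcases lt_or_gt_of_ne hqs with h | h <;> nlinarith
  rcases lt_trichotomy (p * s - q * r) 2 with hd | hd | hd
  · have hd1 : p * s - q * r = 1 := by omega
    have := core_det_one a t b ha1 ha2 n i j s q r p hi his hj hjq hs hq hr hp hd1
    rw [hd1]
    have : 4 * (q * s) ≤ (n-1)^2 := by nlinarith [sq_nonneg (q - s)]
    nlinarith
  · rw [hd]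
    -- halving facts
    have halfs : ∀ h : ℤ, s = 2 * h → q + h ≤ n - 1 ∨ q % 2 = 0 := by
      intro h hsh
      rcases Int.emod_two_eq_zero_or_one q with h0 | h0
      · right; exact h0
      left
      have hre : r % 2 = 0 := by
        have h4 : q * r = 2 * (p * h - 1) := by rw [hsh] at hd; linarith
        have h5 : (q * r) % 2 = 0 := by omega
        rcases Int.emod_two_eq_zero_or_one r with h6 | h6
        · exact h6
        · rw [Int.mul_emod, h0, h6] at h5; norm_num at h5
      obtain ⟨r', hr'⟩ : ∃ r', r = 2 * r' := ⟨r / 2, by omega⟩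
      have hd1 : p * h - q * r' = 1 := by rw [hsh, hr'] at hd; linarith
      have key : ∀ i', 1 ≤ i' → i' + h ≤ n → r' + 1 ≤ a (i' + h) - a i' → q + h ≤ n - 1 := by
        intro i' h1 h2 h3
        obtain ⟨r2, hr2⟩ : ∃ r2, a (i' + h) - a i' = r2 + 1 := ⟨a (i' + h) - a i' - 1, by omega⟩
        have : r2 = r' := by
          have e1 := ha1 i'
          have e2 := ha2 (i' + h)
          have e3 : (a (i'+h) : ℝ) = a i' + r2 + 1 := by
            have : a (i'+h) = a i' + r2 + 1 := by omega
            exact_mod_cast this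
          rw [e3] at e2; push_cast at e2
          have e4 : (r2:ℝ) < h * t := by linarith
          have hq' : (0:ℝ) < q := by exact_mod_cast hq
          have hh' : (0:ℝ) < h := by
            have : 0 < h := by omega
            exact_mod_cast this
          have e5 : (0:ℝ) < p * h - q * r2 := by
            nlinarith [mul_pos hβ hh', mul_pos hq' (sub_pos.2 e4)]
          have e6 : 0 < p * h - q * r2 := by exact_mod_cast e5
          have : q * (r2 - r') < 1 := by linarith
          by_contra hne
          have : 1 ≤ r2 - r' := by omega
          nlinarith
        subst this
        exact core_det_one a t b ha1 ha2 n i' j h q r2 p h1 h2 hj hjq (by omega) hq hr2 hp hd1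
      have hsplit : i + s = i + h + h := by omega
      rw [hsplit] at hr
      by_cases hc : r' + 1 ≤ a (i + h) - a i
      · exact key i hi (by omega) hc
      · exact key (i + h) (by omega) (by omega) (by omega)
    have halfq : ∀ h : ℤ, q = 2 * h → h + s ≤ n - 1 ∨ s % 2 = 0 := by
      intro h hsh
      rcases Int.emod_two_eq_zero_or_one s with h0 | h0
      · right; exact h0
      left
      have hre : p % 2 = 0 := by
        have h4 : p * s = 2 * (h * r + 1) := by rw [hsh] at hd; linarith
        have h5 : (p * s) % 2 = 0 := by omega
        rcases Int.emod_two_eq_zero_or_one p with h6 | h6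
        · exact h6
        · rw [Int.mul_emod, h0, h6] at h5; norm_num at h5
      obtain ⟨p', hp'⟩ : ∃ p', p = 2 * p' := ⟨p / 2, by omega⟩
      have hd1 : p' * s - h * r = 1 := by rw [hsh, hp'] at hd; linarith
      have key : ∀ j', 1 ≤ j' → j' + h ≤ n → a (j' + h) - a j' ≤ p' - 1 → h + s ≤ n - 1 := by
        intro j' h1 h2 h3
        obtain ⟨p2, hp2⟩ : ∃ p2, a (j' + h) - a j' = p2 - 1 := ⟨a (j' + h) - a j' + 1, by omega⟩
        have : p2 = p' := by
          have e1 := ha2 j'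
          have e2 := ha1 (j' + h)
          have e3 : (a (j'+h) : ℝ) = a j' + p2 - 1 := by
            have : a (j'+h) = a j' + p2 - 1 := by omega
            exact_mod_cast this
          rw [e3] at e2; push_cast at e2
          have e4 : h * t < (p2:ℝ) := by linarith
          have hs' : (0:ℝ) < s := by exact_mod_cast hs
          have hh' : (0:ℝ) < h := by
            have : 0 < h := by omega
            exact_mod_cast this
          have e5 : (0:ℝ) < p2 * s - h * r := by
            nlinarith [mul_pos hα hh', mul_pos hs' (sub_pos.2 e4)]
          have e6 : 0 < p2 * s - h * r := by exact_mod_cast e5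
          have : s * (p' - p2) < 1 := by linarith
          by_contra hne
          have : 1 ≤ p' - p2 := by omega
          nlinarith
        subst this
        exact core_det_one a t b ha1 ha2 n i j' s h r p2 hi his h1 h2 hs (by omega) hr hp2 hd1
      have hsplit : j + q = j + h + h := by omega
      rw [hsplit] at hp
      by_cases hc : a (j + h) - a j ≤ p' - 1
      · exact key j hj (by omega) hc
      · exact key (j + h) (by omega) (by omega) (by omega)
    have hfin : q * s ≤ (n - 1) * (n - 3) := by
      rcases lt_or_gt_of_ne hqs with h | h
      · by_cases h3 : q ≤ n - 3
        · nlinarith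
        · exfalso
          have h4 : q = n - 2 := by omega
          have h5 : s = n - 1 := by omega
          have A := halfs (s / 2)
          have B := halfq (q / 2)
          omega
      · by_cases h3 : s ≤ n - 3
        · nlinarith
        · exfalso
          have h4 : s = n - 2 := by omega
          have h5 : q = n - 1 := by omega
          have A := halfs (s / 2)
          have B := halfq (q / 2)
          omega
    linarith
  · have h3 : 3 ≤ p * s - q * r := by omega
    have : K * 3 ≤ K * (p * s - q * r) := by
      apply mul_le_mul_of_nonneg_left h3; omega
    nlinarith

theorem adm_main (n K : ℕ) (hn : 4 < n) (hK : (n - 1) * (n - 3) < 2 * K) : NAdmissible n K := by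
  intro t b
  obtain ⟨a, ha⟩ : ∃ a : ℤ → ℤ, ∀ i : ℤ, a i = ⌈(i:ℝ) * t - b⌉ := ⟨_, fun _ => rfl⟩
  have ha1 : ∀ i : ℤ, (i:ℝ) * t - b ≤ a i := fun i => by rw [ha]; exact Int.le_ceil _
  have ha2 : ∀ i : ℤ, (a i : ℝ) < (i:ℝ) * t - b + 1 := fun i => by
    rw [ha]; exact Int.ceil_lt_add_one _
  have hKz : ((n:ℤ) - 1) * ((n:ℤ) - 3) < 2 * (K:ℤ) := by
    have h1 : ((n - 1 : ℕ) : ℤ) = (n:ℤ) - 1 := by omega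
    have h3 : ((n - 3 : ℕ) : ℤ) = (n:ℤ) - 3 := by omega
    rw [← h1, ← h3]; exact_mod_cast hK
  have hnz : (4:ℤ) < n := by exact_mod_cast hn
  have hK0 : (0:ℤ) < K := by nlinarith
  let P : Finset (ℤ × ℤ) :=
    ((Finset.Icc 1 (n:ℤ)) ×ˢ (Finset.Icc 1 (n:ℤ))).filter (fun x => x.1 < x.2)
  have hP : ∀ x : ℤ × ℤ, x ∈ P ↔ 1 ≤ x.1 ∧ x.2 ≤ n ∧ x.1 < x.2 := by
    intro x
    simp only [P, Finset.mem_filter, Finset.mem_product, Finset.mem_Icc]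
    omega
  have hne : P.Nonempty := ⟨(1, 2), by rw [hP]; simp; omega⟩
  obtain ⟨⟨i, i'⟩, hiP, himax⟩ := Finset.exists_max_image P
    (fun x => ((a x.2 - a x.1 - 1 : ℤ) : ℚ) / ((x.2 - x.1 : ℤ) : ℚ)) hne
  obtain ⟨⟨j, j'⟩, hjP, hjmin⟩ := Finset.exists_min_image P
    (fun x => ((a x.2 - a x.1 + 1 : ℤ) : ℚ) / ((x.2 - x.1 : ℤ) : ℚ)) hne
  rw [hP] at hiP hjP
  simp only at hiP hjP himax hjmin
  obtain ⟨s, hs⟩ : ∃ s, s = i' - i := ⟨_, rfl⟩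
  obtain ⟨q, hq⟩ : ∃ q, q = j' - j := ⟨_, rfl⟩
  obtain ⟨r, hr⟩ : ∃ r, r = a i' - a i - 1 := ⟨_, rfl⟩
  obtain ⟨p, hp⟩ : ∃ p, p = a j' - a j + 1 := ⟨_, rfl⟩
  rw [← hs, ← hr] at himax
  rw [← hq, ← hp] at hjmin
  have hs0 : 0 < s := by omega
  have hq0 : 0 < q := by omega
  have hkey := key_bound a t b ha1 ha2 n K i j s q r p hnz hKz (by omega) (by omega) (by omega)
    (by omega) hs0 hq0 (by rw [show i + s = i' by omega]; omega)
    (by rw [show j + q = j' by omega]; omega)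
  have hmax' : ∀ x y : ℤ, 1 ≤ x → y ≤ n → x < y → (a y - a x - 1) * s ≤ r * (y - x) := by
    intro x y h1 h2 h3
    have := himax (x, y) ((hP _).2 ⟨h1, h2, h3⟩)
    rw [div_le_div_iff₀ (by exact_mod_cast (by simpa using h3)) (by exact_mod_cast hs0)] at this
    exact_mod_cast this
  have hmin' : ∀ x y : ℤ, 1 ≤ x → y ≤ n → x < y → p * (y - x) ≤ (a y - a x + 1) * q := by
    intro x y h1 h2 h3
    have := hjmin (x, y) ((hP _).2 ⟨h1, h2, h3⟩)
    rw [div_le_div_iff₀ (by exact_mod_cast hq0) (by exact_mod_cast (by simpa using h3))] at this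
    exact_mod_cast this
  obtain ⟨T, hT⟩ : ∃ T : ℤ, T = (K * r) / s + 1 := ⟨_, rfl⟩
  have hT1 : K * r < T * s := by
    have := Int.lt_ediv_add_one_mul_self (K * r) hs0
    rw [hT]; exact this
  have hT2 : T * s ≤ K * r + s := by
    have := Int.ediv_mul_le (K * r) hs0.ne'
    rw [hT]; linarith
  have hT3 : T * q < K * p := by
    by_contra hc
    push Not at hc
    have h1 : T * s * q ≤ (K * r + s) * q := mul_le_mul_of_nonneg_right hT2 hq0.le
    have h2 : K * p * s ≤ T * q * s := mul_le_mul_of_nonneg_right hc hs0.le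
    nlinarith
  have hlow : ∀ x y : ℤ, 1 ≤ x → y ≤ n → x < y → K * (a y - a x - 1) < T * (y - x) := by
    intro x y h1 h2 h3
    have h4 := hmax' x y h1 h2 h3
    have h5 : K * ((a y - a x - 1) * s) ≤ K * (r * (y - x)) :=
      mul_le_mul_of_nonneg_left h4 hK0.le
    have h6 : K * r * (y - x) < T * s * (y - x) := mul_lt_mul_of_pos_right hT1 (by omega)
    have h7 : (K * (a y - a x - 1)) * s < (T * (y - x)) * s := by linarith
    exact lt_of_mul_lt_mul_right h7 hs0.le
  have hupp : ∀ x y : ℤ, 1 ≤ x → y ≤ n → x < y → T * (y - x) < K * (a y - a x + 1) := by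
    intro x y h1 h2 h3
    have h4 := hmin' x y h1 h2 h3
    have h5 : K * (p * (y - x)) ≤ K * ((a y - a x + 1) * q) :=
      mul_le_mul_of_nonneg_left h4 hK0.le
    have h6 : T * q * (y - x) < K * p * (y - x) := mul_lt_mul_of_pos_right hT3 (by omega)
    have h7 : (T * (y - x)) * q < (K * (a y - a x + 1)) * q := by linarith
    exact lt_of_mul_lt_mul_right h7 hq0.le
  obtain ⟨m, hm, hmm⟩ := Finset.exists_max_image (Finset.Icc 1 (n:ℤ))
    (fun x => x * T - K * a x) ⟨1, by simp; omega⟩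
  rw [Finset.mem_Icc] at hm
  refine ⟨T, m * T - K * a m, ?_⟩
  intro x hx1 hx2
  have hx1' : (1:ℤ) ≤ x := by exact_mod_cast hx1
  have hx2' : (x:ℤ) ≤ n := by exact_mod_cast hx2
  have h1 := hmm x (Finset.mem_Icc.2 ⟨hx1', hx2'⟩)
  have h2 : K * (a x - 1) < x * T - (m * T - K * a m) := by
    rcases lt_trichotomy (x:ℤ) m with h | h | h
    · have := hupp x m hx1' hm.2 h
      linarith
    · rw [h]; linarith
    · have := hlow m x hm.1 hx2' h
      linarith
  have h3 : x * T - (m * T - K * a m) ≤ K * a x := by linarith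
  have hax : ⌈(x:ℝ) * t - b⌉ = a x := by rw [ha]; simp
  rw [hax, eq_comm, Int.ceil_eq_iff]
  have hKr : (0:ℝ) < K := by exact_mod_cast hK0
  constructor
  · rw [lt_div_iff₀ hKr]
    have : ((K * (a x - 1) : ℤ) : ℝ) < ((x * T - (m * T - K * a m) : ℤ) : ℝ) := by
      exact_mod_cast h2
    push_cast at this ⊢
    linarith
  · rw [div_le_iff₀ hKr]
    have : ((x * T - (m * T - K * a m) : ℤ) : ℝ) ≤ ((K * a x : ℤ) : ℝ) := by
      exact_mod_cast h3
    push_cast at this ⊢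
    linarith

/-- For `n > 4`, every `K` with `2K > (n−1)(n−3)` is `n`-admissible,
and hence the least `n`-admissible `K` is at most `(n−1)(n−3)/2 + 1`. -/
theorem stmt_2 (n : ℕ) (hn : 4 < n) :
    (∀ K : ℕ, (n - 1) * (n - 3) < 2 * K → NAdmissible n K) ∧
    sInf {K : ℕ | 1 ≤ K ∧ NAdmissible n K} ≤ (n - 1) * (n - 3) / 2 + 1 := by
  refine ⟨fun K hK => adm_main n K hn hK, Nat.sInf_le ⟨by omega, adm_main n _ hn ?_⟩⟩
  omega
end

section
/- Let n be a natural number with n > 2. Then every natural number K with K > (n − 1)·(n − 2) is n-admissible. -/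
theorem exists_TB (n K : ℕ) (hn : 2 < n) (hK : (n - 1) * (n - 2) < K) (t : ℝ) (c : ℕ → ℤ)
    (hc : ∀ i j : ℕ, (c i : ℝ) - c j - 1 < ((i : ℝ) - j) * t ∧
      ((i : ℝ) - j) * t < (c i : ℝ) - c j + 1) :
    ∃ T B : ℤ, ∀ i : ℕ, 1 ≤ i → i ≤ n →
      (K : ℤ) * (c i - 1) < i * T - B ∧ (i : ℤ) * T - B ≤ K * c i := by
  obtain ⟨m, rfl⟩ : ∃ m, n = m + 3 := ⟨n - 3, by omega⟩
  have hK' : ((m : ℤ) + 2) * (m + 1) < K := by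
    have : (m + 2) * (m + 1) < K := by simpa using hK
    exact_mod_cast this
  have hKpos : (0 : ℤ) < K := by nlinarith
  let S : Finset (ℕ × ℕ) :=
    ((Finset.Icc 1 (m + 3)) ×ˢ (Finset.Icc 1 (m + 3))).filter (fun x => x.2 < x.1)
  have hS : ∀ x : ℕ × ℕ, x ∈ S ↔ (1 ≤ x.1 ∧ x.1 ≤ m + 3) ∧ (1 ≤ x.2 ∧ x.2 ≤ m + 3) ∧ x.2 < x.1 := by
    intro x
    simp [S, and_assoc]
  have hne : S.Nonempty := ⟨(2, 1), by rw [hS]; simp⟩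
  obtain ⟨⟨i1, j1⟩, h1, hmax⟩ := S.exists_max_image
    (fun x => ((c x.1 - c x.2 - 1 : ℤ) : ℚ) / ((x.1 - x.2 : ℤ) : ℚ)) hne
  obtain ⟨⟨i2, j2⟩, h2, hmin⟩ := S.exists_min_image
    (fun x => ((c x.1 - c x.2 + 1 : ℤ) : ℚ) / ((x.1 - x.2 : ℤ) : ℚ)) hne
  rw [hS] at h1 h2
  simp only at h1 h2 hmax hmin
  have hA := (hc i1 j1).1
  have hB := (hc i2 j2).2
  obtain ⟨p, hp⟩ : ∃ p : ℤ, p = c i1 - c j1 - 1 := ⟨_, rfl⟩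
  obtain ⟨q, hq⟩ : ∃ p : ℤ, p = (i1 : ℤ) - j1 := ⟨_, rfl⟩
  obtain ⟨r, hr⟩ : ∃ p : ℤ, p = c i2 - c j2 + 1 := ⟨_, rfl⟩
  obtain ⟨s, hs⟩ : ∃ p : ℤ, p = (i2 : ℤ) - j2 := ⟨_, rfl⟩
  have hq0 : 0 < q := by omega
  have hs0 : 0 < s := by omega
  have hqn : q ≤ m + 2 := by omega
  have hsn : s ≤ m + 2 := by omega
  rw [← hp, ← hq] at hmax
  rw [← hr, ← hs] at hmin
  have hpt : (p : ℝ) < q * t := by rw [hp, hq]; push_cast; exact hA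
  have hrt : (s : ℝ) * t < r := by rw [hr, hs]; push_cast; exact hB
  have hps : p * s < r * q := by
    have hq0' : (0 : ℝ) < q := by exact_mod_cast hq0
    have hs0' : (0 : ℝ) < s := by exact_mod_cast hs0
    have : (p : ℝ) * s < r * q := by nlinarith
    exact_mod_cast this
  obtain ⟨T, hT⟩ : ∃ T : ℤ, T = (K * p) / q + 1 := ⟨_, rfl⟩
  have hT1 : K * p < q * T := by
    have := Int.lt_ediv_add_one_mul_self (K * p) hq0
    rw [hT]; linarith
  have hT2 : q * T ≤ K * p + q := by
    have := Int.ediv_mul_le (K * p) hq0.ne'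
    rw [hT]; linarith
  have hkey : s * q < K * (r * q - p * s) := by
    by_cases h : q = s
    · subst h
      have : 1 ≤ r - p := by
        have : p < r := lt_of_mul_lt_mul_right hps hq0.le
        omega
      have hKq : q < K := by nlinarith
      have h3 : r * q - p * q = (r - p) * q := by ring
      rw [h3]
      have e1 : 1 * q ≤ (r - p) * q := mul_le_mul_of_nonneg_right this hq0.le
      have e2 := mul_le_mul_of_nonneg_left e1 hKpos.le
      have e3 := mul_lt_mul_of_pos_right hKq hq0
      linarith
    · have : s * q ≤ (m + 2) * (m + 1) := by
        rcases lt_or_gt_of_ne h with h | h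
        · exact mul_le_mul hsn (by omega) hq0.le (by omega)
        · rw [mul_comm]; exact mul_le_mul hqn (by omega) hs0.le (by omega)
      have e1 : 1 ≤ r * q - p * s := by omega
      have e2 := mul_le_mul_of_nonneg_left e1 hKpos.le
      linarith
  have hT3 : s * T < K * r := by
    have e1 := mul_le_mul_of_nonneg_left hT2 hs0.le
    have : q * (s * T) < q * (K * r) := by linarith
    exact lt_of_mul_lt_mul_left this hq0.le
  have hpair : ∀ i j : ℕ, 1 ≤ j → j < i → i ≤ m + 3 →
      K * (c i - c j - 1) < ((i : ℤ) - j) * T ∧ ((i : ℤ) - j) * T < K * (c i - c j + 1) := by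
    intro i j hj hji hi
    have hmem : (i, j) ∈ S := by rw [hS]; simp only; omega
    have a1 := hmax _ hmem
    have a2 := hmin _ hmem
    simp only at a1 a2
    obtain ⟨d, hd⟩ : ∃ p : ℤ, p = (i : ℤ) - j := ⟨_, rfl⟩
    have hd0 : 0 < d := by omega
    rw [← hd] at a1 a2 ⊢
    rw [div_le_div_iff₀ (by exact_mod_cast hd0) (by exact_mod_cast hq0)] at a1
    rw [div_le_div_iff₀ (by exact_mod_cast hs0) (by exact_mod_cast hd0)] at a2
    have b1 : (c i - c j - 1) * q ≤ p * d := by exact_mod_cast a1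
    have b2 : r * d ≤ (c i - c j + 1) * s := by exact_mod_cast a2
    generalize c i - c j - 1 = u at *
    generalize c i - c j + 1 = v at *
    constructor
    · have e1 := mul_le_mul_of_nonneg_left b1 hKpos.le
      have e2 := mul_lt_mul_of_pos_right hT1 hd0
      have : q * (K * u) < q * (d * T) := by linarith
      exact lt_of_mul_lt_mul_left this hq0.le
    · have e1 := mul_le_mul_of_nonneg_left b2 hKpos.le
      have e2 := mul_lt_mul_of_pos_right hT3 hd0
      have : s * (d * T) < s * (K * v) := by linarith
      exact lt_of_mul_lt_mul_left this hs0.le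
  obtain ⟨k, hk, hkmax⟩ := (Finset.Icc 1 (m + 3)).exists_max_image
    (fun i : ℕ => (i : ℤ) * T - K * c i) ⟨1, by simp⟩
  rw [Finset.mem_Icc] at hk
  refine ⟨T, k * T - K * c k, fun i hi1 hi2 => ⟨?_, ?_⟩⟩
  · rcases lt_trichotomy i k with h | h | h
    · have := (hpair k i hi1 h hk.2).2
      linarith
    · subst h; linarith
    · have := (hpair i k hk.1 h hi2).1
      linarith
  · have := hkmax i (Finset.mem_Icc.2 ⟨hi1, hi2⟩)
    linarith

/-- For `n > 2`, every `K > (n−1)(n−2)` is `n`-admissible. -/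
theorem stmt_3 (n : ℕ) (hn : 2 < n) :
    ∀ K : ℕ, (n - 1) * (n - 2) < K → NAdmissible n K := by
  intro K hK t b
  obtain ⟨T, B, h⟩ := exists_TB n K hn hK t (fun i => ⌈(i : ℝ) * t - b⌉) (by
    intro i j
    have h1 := Int.le_ceil ((i : ℝ) * t - b)
    have h2 := Int.ceil_lt_add_one ((i : ℝ) * t - b)
    have h3 := Int.le_ceil ((j : ℝ) * t - b)
    have h4 := Int.ceil_lt_add_one ((j : ℝ) * t - b)
    constructor <;> linarith)
  refine ⟨T, B, fun i hi1 hi2 => ?_⟩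
  obtain ⟨h1, h2⟩ := h i hi1 hi2
  have hK0 : (0 : ℝ) < K := by exact_mod_cast (Nat.zero_le _).trans_lt hK
  symm
  rw [Int.ceil_eq_iff, lt_div_iff₀ hK0, div_le_iff₀ hK0]
  have h1' : (K : ℝ) * ((⌈(i : ℝ) * t - b⌉ : ℤ) - 1) < i * T - B := by exact_mod_cast h1
  have h2' : (i : ℝ) * T - B ≤ K * (⌈(i : ℝ) * t - b⌉ : ℤ) := by exact_mod_cast h2
  constructor <;> linarith
end

section
/- Let n be a natural number with n ≥ 15. Then every n-admissible natural number K satisfies 4·K ≥ (n − 1)². -/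
theorem adm_key (n K : ℕ) (hK : 1 ≤ K) (h : NAdmissible n K) (r : ℕ) (hr : 1 ≤ r)
    (hrn : r + 2 ≤ n) : ∃ T : ℤ, ((r : ℤ) - 1) * T < K ∧ (K : ℤ) < (r + 1) * T := by
  obtain ⟨T, B, hTB⟩ := h (1 / (r : ℝ)) (3 / (2 * (r : ℝ)))
  have hr0 : (1 : ℝ) ≤ r := by exact_mod_cast hr
  have hrp : (0 : ℝ) < r := by linarith
  have hK0 : (0 : ℝ) < K := by exact_mod_cast hK
  have e1 : ⌈((1 : ℕ) : ℝ) * (1 / (r : ℝ)) - 3 / (2 * (r : ℝ))⌉ ≤ 0 := by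
    rw [Int.ceil_le]
    have : ((1 : ℕ) : ℝ) * (1 / (r : ℝ)) - 3 / (2 * (r : ℝ)) = - (1 / (2 * r)) := by
      field_simp; norm_num
    rw [this]
    have : 0 < 1 / (2 * (r : ℝ)) := by positivity
    push_cast; linarith
  have e2 : 0 < ⌈((2 : ℕ) : ℝ) * (1 / (r : ℝ)) - 3 / (2 * (r : ℝ))⌉ := by
    rw [Int.lt_ceil]
    have : ((2 : ℕ) : ℝ) * (1 / (r : ℝ)) - 3 / (2 * (r : ℝ)) = (1 / (2 * r)) := by
      field_simp; norm_num
    rw [this]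
    have : 0 < 1 / (2 * (r : ℝ)) := by positivity
    push_cast; linarith
  have e3 : ⌈((r + 1 : ℕ) : ℝ) * (1 / (r : ℝ)) - 3 / (2 * (r : ℝ))⌉ ≤ 1 := by
    rw [Int.ceil_le]
    have : ((r + 1 : ℕ) : ℝ) * (1 / (r : ℝ)) - 3 / (2 * (r : ℝ)) = 1 - (1 / (2 * r)) := by
      push_cast; field_simp; ring
    rw [this]
    have : 0 < 1 / (2 * (r : ℝ)) := by positivity
    push_cast; linarith
  have e4 : 1 < ⌈((r + 2 : ℕ) : ℝ) * (1 / (r : ℝ)) - 3 / (2 * (r : ℝ))⌉ := by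
    rw [Int.lt_ceil]
    have : ((r + 2 : ℕ) : ℝ) * (1 / (r : ℝ)) - 3 / (2 * (r : ℝ)) = 1 + (1 / (2 * r)) := by
      push_cast; field_simp; ring
    rw [this]
    have : 0 < 1 / (2 * (r : ℝ)) := by positivity
    push_cast; linarith
  rw [hTB 1 (by omega) (by omega), Int.ceil_le, div_le_iff₀ hK0] at e1
  rw [hTB 2 (by omega) (by omega), Int.lt_ceil, lt_div_iff₀ hK0] at e2
  rw [hTB (r + 1) (by omega) (by omega), Int.ceil_le, div_le_iff₀ hK0] at e3
  rw [hTB (r + 2) (by omega) (by omega), Int.lt_ceil, lt_div_iff₀ hK0] at e4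
  push_cast at e1 e2 e3 e4
  refine ⟨T, ?_, ?_⟩
  · have : ((r : ℝ) - 1) * T < K := by linarith
    exact_mod_cast this
  · have : (K : ℝ) < (r + 1) * T := by linarith
    exact_mod_cast this

theorem adm_gap (n K : ℕ) (hK : 1 ≤ K) (h : NAdmissible n K) (r m : ℤ) (hr : 1 ≤ r)
    (hrn : r + 2 ≤ n) (h1 : (r + 1) * m ≤ K) (h2 : (K : ℤ) ≤ (r - 1) * (m + 1)) : False := by
  lift r to ℕ using by omega
  obtain ⟨T, hT1, hT2⟩ := adm_key n K hK h r (by omega) (by omega)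
  have a : m < T := by
    by_contra hc
    push Not at hc
    nlinarith
  have b : m + 1 ≤ T := a
  nlinarith

/-- For `n ≥ 15`, every `n`-admissible `K ≥ 1` satisfies `4K ≥ (n−1)²`. -/
theorem stmt_4 (n : ℕ) (hn : 15 ≤ n) (K : ℕ) (hK : 1 ≤ K)
    (h : NAdmissible n K) : (n - 1) ^ 2 ≤ 4 * K := by
  by_contra hc
  push Not at hc
  obtain ⟨N, rfl⟩ : ∃ N, n = N + 1 := ⟨n - 1, by omega⟩
  simp only [Nat.add_sub_cancel] at hc
  have gap := adm_gap (N + 1) K hK h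
  push_cast at gap
  have hc' : 4 * (K : ℤ) + 1 ≤ (N : ℤ) ^ 2 := by exact_mod_cast hc
  have hK' : (1 : ℤ) ≤ K := by exact_mod_cast hK
  have hN : (14 : ℤ) ≤ N := by omega
  generalize (K : ℤ) = k at *
  generalize (N : ℤ) = M at *
  have d1 := Int.mul_ediv_add_emod (k - 1) M
  have d2 := Int.emod_nonneg (k - 1) (show M ≠ 0 by omega)
  have d3 := Int.emod_lt_of_pos (k - 1) (show 0 < M by omega)
  have d0 : 0 ≤ (k - 1) / M := Int.ediv_nonneg (by omega) (by omega)
  generalize (k - 1) / M = m at *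
  generalize (k - 1) % M = u at *
  by_cases hcase : k ≤ (M - 2) * (m + 1)
  · exact gap (M - 1) m (by omega) (by omega) (by linarith) (by linarith)
  push Not at hcase
  have f1 := Int.mul_ediv_add_emod k (m + 1)
  have f2 := Int.emod_nonneg k (show m + 1 ≠ 0 by omega)
  have f3 := Int.emod_lt_of_pos k (show 0 < m + 1 by omega)
  generalize k / (m + 1) = g at *
  generalize k % (m + 1) = v at *
  have g1 : M - 2 ≤ g := by
    by_contra hh
    push Not at hh
    nlinarith
  have g2 : g ≤ M := by
    by_contra hh
    push Not at hh
    nlinarith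
  have t3 : 3 * (m + 1) ≤ M - 3 := by
    by_contra hh
    push Not at hh
    rcases eq_or_lt_of_le hN with h14 | h15
    · subst h14; omega
    · nlinarith
  exact gap (g - 1) (m + 1) (by omega) (by omega) (by linarith) (by nlinarith)
end

section
/- Let n be a natural number with n ≥ 27. Then every n-admissible natural number K satisfies 4·K > n². -/
theorem key_aux (n K : ℕ) (hK : 1 ≤ K) (h : NAdmissible n K) (q : ℕ) (hq : 2 ≤ q)
    (hqn : q + 2 ≤ n) : ∃ T : ℤ, ((q : ℤ) - 1) * T < K ∧ (K : ℤ) < ((q : ℤ) + 1) * T := by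
  obtain ⟨T, B, hTB⟩ := h (1 / q) (1 / q)
  have hq0 : (0 : ℝ) < q := by positivity
  have hq2 : (2 : ℝ) ≤ q := by exact_mod_cast hq
  have hK0 : (0 : ℝ) < K := by exact_mod_cast hK
  have e1 := hTB 1 le_rfl (by omega)
  have e2 := hTB 2 (by omega) (by omega)
  have e3 := hTB (q + 1) (by omega) (by omega)
  have e4 := hTB (q + 2) (by omega) (by omega)
  have f1 : ⌈((1 : ℕ) : ℝ) * (1 / q) - 1 / q⌉ = 0 := by simp
  have f2 : ⌈((2 : ℕ) : ℝ) * (1 / q) - 1 / q⌉ = 1 := by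
    rw [Int.ceil_eq_iff]
    have : ((2 : ℕ) : ℝ) * (1 / q) - 1 / q = 1 / q := by push_cast; ring
    rw [this]
    constructor
    · simp; omega
    · rw [div_le_iff₀ hq0]; push_cast; linarith
  have f3 : ⌈((q + 1 : ℕ) : ℝ) * (1 / q) - 1 / q⌉ = 1 := by
    have : ((q + 1 : ℕ) : ℝ) * (1 / q) - 1 / q = 1 := by push_cast; field_simp; ring
    rw [this]; simp
  have f4 : ⌈((q + 2 : ℕ) : ℝ) * (1 / q) - 1 / q⌉ = 2 := by
    rw [Int.ceil_eq_iff]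
    have : ((q + 2 : ℕ) : ℝ) * (1 / q) - 1 / q = (q + 1) / q := by push_cast; field_simp; ring
    rw [this, lt_div_iff₀ hq0, div_le_iff₀ hq0]
    push_cast
    constructor <;> linarith
  rw [f1, eq_comm, Int.ceil_eq_iff, lt_div_iff₀ hK0, div_le_iff₀ hK0] at e1
  rw [f2, eq_comm, Int.ceil_eq_iff, lt_div_iff₀ hK0, div_le_iff₀ hK0] at e2
  rw [f3, eq_comm, Int.ceil_eq_iff, lt_div_iff₀ hK0, div_le_iff₀ hK0] at e3
  rw [f4, eq_comm, Int.ceil_eq_iff, lt_div_iff₀ hK0, div_le_iff₀ hK0] at e4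
  push_cast at e1 e2 e3 e4
  refine ⟨T, ?_, ?_⟩
  · have : ((q : ℝ) - 1) * T < K := by linarith [e2.1, e3.2]
    exact_mod_cast this
  · have : (K : ℝ) < ((q : ℝ) + 1) * T := by linarith [e1.2, e4.1]
    exact_mod_cast this

/-- For `n ≥ 27`, every `n`-admissible `K ≥ 1` satisfies `4K > n²`. -/
theorem stmt_5 (n : ℕ) (hn : 27 ≤ n) (K : ℕ) (hK : 1 ≤ K)
    (h : NAdmissible n K) : n ^ 2 < 4 * K := by
  by_contra hc
  obtain ⟨A, a1, a2⟩ := key_aux n K hK h (n - 2) (by omega) (by omega)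
  obtain ⟨B, b1, b2⟩ := key_aux n K hK h (n - 3) (by omega) (by omega)
  obtain ⟨C, c1, c2⟩ := key_aux n K hK h (n - 4) (by omega) (by omega)
  rw [Nat.cast_sub (by omega)] at a1 a2 b1 b2 c1 c2
  push_cast at a1 a2 b1 b2 c1 c2
  have hc' : 4 * (K : ℤ) ≤ (n : ℤ) ^ 2 := by exact_mod_cast not_lt.mp hc
  have hn' : (27 : ℤ) ≤ n := by exact_mod_cast hn
  generalize (n : ℤ) = m at *
  generalize (K : ℤ) = k at *
  have hAC : A + 1 ≤ C := by
    have : (m - 3) * A < (m - 3) * C := by linarith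
    exact lt_of_mul_lt_mul_left this (by linarith)
  have h3 : m - 4 ≤ 3 * A := by
    rcases le_or_gt B A with hB | hB
    · have h1 : (m - 5) * (A + 1) ≤ (m - 5) * C := mul_le_mul_of_nonneg_left hAC (by linarith)
      have h2 : (m - 2) * B ≤ (m - 2) * A := mul_le_mul_of_nonneg_left hB (by linarith)
      have : m - 5 < 3 * A := by linarith
      omega
    · have h1 : (m - 4) * (A + 1) ≤ (m - 4) * B := mul_le_mul_of_nonneg_left hB (by linarith)
      have : m - 4 < 3 * A := by linarith
      omega
  have h4 : (m - 3) * (m - 4) ≤ (m - 3) * (3 * A) := mul_le_mul_of_nonneg_left h3 (by linarith)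
  nlinarith
end

section
/- Let n ≥ 1 and K ≥ 1 be natural numbers, let t and b be real numbers, and set Sᵢ = ⌈i·t − b⌉ for i ∈ {1, …, n}. Then there exist integers T and B with ⌈(i·T − B)/K⌉ = Sᵢ for all i ∈ {1, …, n} if and only if there exists an integer T such that: (a) for all i, j ∈ {1, …, n} with i > j, ⌊(Sᵢ − Sⱼ − 1)·K/(i − j)⌋ < T and T < ⌈(Sᵢ − Sⱼ + 1)·K/(i − j)⌉; and (b) for all i, j ∈ {1, …, n}, i·T − K·Sᵢ < j·T − K·Sⱼ + K. -/
/-- Existence of `T, B` with `⌈(i·T − B)/K⌉ = Sᵢ` for all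
`i ∈ {1, …, n}` is equivalent to the existence of an integer `T` satisfying the
floor/ceiling bounds (a) and the strict inequalities (b). -/
theorem stmt_6 (n K : ℕ) (hn : 1 ≤ n) (hK : 1 ≤ K) (t b : ℝ)
    (S : ℕ → ℤ) (hS : ∀ i : ℕ, 1 ≤ i → i ≤ n → S i = ⌈(i : ℝ) * t - b⌉) :
    (∃ T B : ℤ, ∀ i : ℕ, 1 ≤ i → i ≤ n →
        ⌈((i : ℝ) * (T : ℝ) - (B : ℝ)) / (K : ℝ)⌉ = S i) ↔
    (∃ T : ℤ,
      (∀ i j : ℕ, 1 ≤ j → j < i → i ≤ n →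
        ⌊((S i : ℝ) - (S j : ℝ) - 1) * (K : ℝ) / ((i : ℝ) - (j : ℝ))⌋ < T ∧
        T < ⌈((S i : ℝ) - (S j : ℝ) + 1) * (K : ℝ) / ((i : ℝ) - (j : ℝ))⌉) ∧
      (∀ i j : ℕ, 1 ≤ i → i ≤ n → 1 ≤ j → j ≤ n →
        (i : ℤ) * T - (K : ℤ) * S i < (j : ℤ) * T - (K : ℤ) * S j + (K : ℤ))) := by
  have hK0 : (0 : ℝ) < (K : ℝ) := by exact_mod_cast hK
  have key : ∀ (T B : ℤ) (i : ℕ), ⌈((i : ℝ) * (T : ℝ) - (B : ℝ)) / (K : ℝ)⌉ = S i ↔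
      ((i : ℤ) * T - (K : ℤ) * S i ≤ B ∧ B < (i : ℤ) * T - (K : ℤ) * S i + (K : ℤ)) := by
    intro T B i
    rw [Int.ceil_eq_iff, lt_div_iff₀ hK0, div_le_iff₀ hK0]
    constructor
    · rintro ⟨h1, h2⟩
      have h1' : (S i - 1) * (K : ℤ) < (i : ℤ) * T - B := by exact_mod_cast h1
      have h2' : (i : ℤ) * T - B ≤ S i * (K : ℤ) := by exact_mod_cast h2
      constructor <;> linarith
    · rintro ⟨h1, h2⟩
      have h1' : (S i - 1) * (K : ℤ) < (i : ℤ) * T - B := by linarith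
      have h2' : (i : ℤ) * T - B ≤ S i * (K : ℤ) := by linarith
      exact ⟨by exact_mod_cast h1', by exact_mod_cast h2'⟩
  simp only [key]
  constructor
  · rintro ⟨T, B, h⟩
    have hb : ∀ i j : ℕ, 1 ≤ i → i ≤ n → 1 ≤ j → j ≤ n →
        (i : ℤ) * T - (K : ℤ) * S i < (j : ℤ) * T - (K : ℤ) * S j + (K : ℤ) :=
      fun i j hi hi' hj hj' => lt_of_le_of_lt (h i hi hi').1 (h j hj hj').2
    refine ⟨T, ?_, hb⟩
    intro i j hj hji hi
    have hd : (0 : ℝ) < (i : ℝ) - (j : ℝ) := sub_pos.2 (by exact_mod_cast hji)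
    have h1 := hb i j (by omega) hi hj (by omega)
    have h2 := hb j i hj (by omega) (by omega) hi
    have h1' : (i : ℝ) * T - (K : ℝ) * S i < (j : ℝ) * T - (K : ℝ) * S j + (K : ℝ) := by
      exact_mod_cast h1
    have h2' : (j : ℝ) * T - (K : ℝ) * S j < (i : ℝ) * T - (K : ℝ) * S i + (K : ℝ) := by
      exact_mod_cast h2
    rw [Int.floor_lt, Int.lt_ceil, div_lt_iff₀ hd, lt_div_iff₀ hd]
    constructor <;> linarith
  · rintro ⟨T, -, hb⟩
    obtain ⟨m, hm, hmax⟩ := Finset.exists_max_image (Finset.Icc 1 n)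
      (fun i : ℕ => (i : ℤ) * T - (K : ℤ) * S i) ⟨1, Finset.mem_Icc.2 ⟨le_rfl, hn⟩⟩
    rw [Finset.mem_Icc] at hm
    exact ⟨T, (m : ℤ) * T - (K : ℤ) * S m, fun i hi hi' =>
      ⟨hmax i (Finset.mem_Icc.2 ⟨hi, hi'⟩), hb m i hm.1 hm.2 hi hi'⟩⟩
end

section
/- Let n ≥ 1 and K ≥ 1 be natural numbers. Suppose that for every real t with 0 ≤ t < 1 and every real b with ⌈t − b⌉ = 1 there exist integers T and B such that ⌈i·t − b⌉ = ⌈(i·T − B)/K⌉ for all i ∈ {1, …, n}. Then K is n-admissible, i.e., for ALL real numbers t and b there exist integers T and B such that ⌈i·t − b⌉ = ⌈(i·T − B)/K⌉ for all i ∈ {1, …, n}. -/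
/-- It suffices to check `t ∈ [0, 1)` with `⌈t − b⌉ = 1` to conclude
that `K` is `n`-admissible. -/
theorem stmt_7 (n K : ℕ) (hn : 1 ≤ n) (hK : 1 ≤ K)
    (h : ∀ t b : ℝ, 0 ≤ t → t < 1 → ⌈t - b⌉ = 1 →
      ∃ T B : ℤ, ∀ i : ℕ, 1 ≤ i → i ≤ n →
        ⌈(i : ℝ) * t - b⌉ = ⌈((i : ℝ) * (T : ℝ) - (B : ℝ)) / (K : ℝ)⌉) :
    ∀ t b : ℝ, ∃ T B : ℤ, ∀ i : ℕ, 1 ≤ i → i ≤ n →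
      ⌈(i : ℝ) * t - b⌉ = ⌈((i : ℝ) * (T : ℝ) - (B : ℝ)) / (K : ℝ)⌉ := by
  intro t b
  obtain ⟨T, B, hTB⟩ := h (Int.fract t) (b + ((⌈Int.fract t - b⌉ - 1 : ℤ) : ℝ))
    (Int.fract_nonneg t) (Int.fract_lt_one t) (by
      rw [← sub_sub, Int.ceil_sub_intCast]; ring)
  generalize ⌈Int.fract t - b⌉ - 1 = m at hTB
  refine ⟨T + K * ⌊t⌋, B - K * m, fun i h1 h2 => ?_⟩
  have hK' : (K : ℝ) ≠ 0 := by
    have : K ≠ 0 := by omega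
    exact_mod_cast this
  have e1 : (i : ℝ) * t - b
      = ((i : ℝ) * Int.fract t - (b + (m : ℝ))) + ((i * ⌊t⌋ + m : ℤ) : ℝ) := by
    have := Int.floor_add_fract t
    push_cast
    linear_combination (-(i : ℝ)) * this
  have e2 : ((i : ℝ) * ((T + K * ⌊t⌋ : ℤ) : ℝ) - ((B - K * m : ℤ) : ℝ)) / (K : ℝ)
      = ((i : ℝ) * (T : ℝ) - (B : ℝ)) / (K : ℝ) + ((i * ⌊t⌋ + m : ℤ) : ℝ) := by
    push_cast
    field_simp
    ring
  rw [e1, e2, Int.ceil_add_intCast, Int.ceil_add_intCast, hTB i h1 h2]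
end

section
/- Let n ≥ 1 be a natural number and let S₁, …, Sₙ be integers. If for all i, j, l, m ∈ {1, …, n} with j > i and m < l one has (j·(Sᵢ − 1) − i·Sⱼ)/(i − j) > (m·(S_l − 1) − l·S_m)/(l − m) (these are real divisions, with i − j < 0 and l − m > 0), then there exist real numbers t and b such that Sᵢ = ⌈i·t − b⌉ for every i ∈ {1, …, n}. -/
/-- If for all `i < j` and `m < l` in `{1, …, n}` we have
`(j(Sᵢ−1) − iSⱼ)/(i−j) > (m(S_l−1) − lS_m)/(l−m)`, then `S` is generated by
some real `t, b` via `Sᵢ = ⌈i·t − b⌉`. -/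
theorem stmt_10 (n : ℕ) (hn : 1 ≤ n) (S : ℕ → ℤ)
    (h : ∀ i j l m : ℕ, 1 ≤ i → i < j → j ≤ n → 1 ≤ m → m < l → l ≤ n →
      ((m : ℝ) * ((S l : ℝ) - 1) - (l : ℝ) * (S m : ℝ)) / ((l : ℝ) - (m : ℝ)) <
      ((j : ℝ) * ((S i : ℝ) - 1) - (i : ℝ) * (S j : ℝ)) / ((i : ℝ) - (j : ℝ))) :
    ∃ t b : ℝ, ∀ i : ℕ, 1 ≤ i → i ≤ n → S i = ⌈(i : ℝ) * t - b⌉ := by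
  classical
  let P : Finset (ℕ × ℕ) :=
    ((Finset.Icc 1 n) ×ˢ (Finset.Icc 1 n)).filter (fun p => p.1 < p.2)
  have hP : ∀ p, p ∈ P ↔ (1 ≤ p.1 ∧ p.1 < p.2 ∧ p.2 ≤ n) := by
    intro p
    simp only [P, Finset.mem_filter, Finset.mem_product, Finset.mem_Icc]
    omega
  obtain ⟨b, hb1, hb2⟩ := Order.exists_between_finsets
    (P.image (fun p : ℕ × ℕ => ((p.1 : ℝ) * ((S p.2 : ℝ) - 1) - (p.2 : ℝ) * (S p.1 : ℝ)) /
      ((p.2 : ℝ) - (p.1 : ℝ))))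
    (P.image (fun p : ℕ × ℕ => ((p.2 : ℝ) * ((S p.1 : ℝ) - 1) - (p.1 : ℝ) * (S p.2 : ℝ)) /
      ((p.1 : ℝ) - (p.2 : ℝ)))) (by
    intro x hx y hy
    obtain ⟨p, hp, rfl⟩ := Finset.mem_image.1 hx
    obtain ⟨q, hq, rfl⟩ := Finset.mem_image.1 hy
    rw [hP] at hp hq
    exact h q.1 q.2 p.2 p.1 hq.1 hq.2.1 hq.2.2 hp.1 hp.2.1 hp.2.2)
  obtain ⟨t, ht1, ht2⟩ := Order.exists_between_finsets
    ((Finset.Icc 1 n).image (fun i : ℕ => ((S i : ℝ) - 1 + b) / (i : ℝ)))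
    ((Finset.Icc 1 n).image (fun i : ℕ => ((S i : ℝ) + b) / (i : ℝ))) (by
    intro x hx y hy
    obtain ⟨i, hi, rfl⟩ := Finset.mem_image.1 hx
    obtain ⟨j, hj, rfl⟩ := Finset.mem_image.1 hy
    rw [Finset.mem_Icc] at hi hj
    have hi0 : (0 : ℝ) < i := by exact_mod_cast hi.1
    have hj0 : (0 : ℝ) < j := by exact_mod_cast hj.1
    show ((S i : ℝ) - 1 + b) / (i : ℝ) < ((S j : ℝ) + b) / (j : ℝ)
    rw [div_lt_div_iff₀ hi0 hj0]
    rcases lt_trichotomy i j with hij | hij | hij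
    · have h1 := hb2 _ (Finset.mem_image_of_mem _ ((hP (i, j)).2 ⟨hi.1, hij, hj.2⟩))
      have h2 : (i : ℝ) - j < 0 := by
        have : (i : ℝ) < j := by exact_mod_cast hij
        linarith
      rw [lt_div_iff_of_neg h2] at h1
      dsimp only at h1
      linarith
    · subst hij
      linarith
    · have h1 := hb1 _ (Finset.mem_image_of_mem _ ((hP (j, i)).2 ⟨hj.1, hij, hi.2⟩))
      have h2 : 0 < (i : ℝ) - j := by
        have : (j : ℝ) < i := by exact_mod_cast hij
        linarith
      dsimp only at h1
      rw [div_lt_iff₀ h2] at h1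
      linarith)
  refine ⟨t, b, fun i hi hin => ?_⟩
  have hi0 : (0 : ℝ) < i := by exact_mod_cast hi
  have h1 := ht1 _ (Finset.mem_image_of_mem _ (Finset.mem_Icc.2 ⟨hi, hin⟩))
  have h2 := ht2 _ (Finset.mem_image_of_mem _ (Finset.mem_Icc.2 ⟨hi, hin⟩))
  rw [div_lt_iff₀ hi0] at h1
  rw [lt_div_iff₀ hi0] at h2
  symm
  rw [Int.ceil_eq_iff]
  constructor <;> linarith
end

section
/- Let n ≥ 1 and K ≥ 1 be natural numbers and let t, b be real numbers. Suppose there exist integers T and B such that ⌈(i·T − B)/K⌉ = ⌈i·t − b⌉ for all i ∈ {1, …, n}. Then either there exists an integer B' such that ⌈(i·⌊t·K⌋ − B')/K⌉ = ⌈i·t − b⌉ for all i ∈ {1, …, n}, or there exists an integer B' such that ⌈(i·⌈t·K⌉ − B')/K⌉ = ⌈i·t − b⌉ for all i ∈ {1, …, n}. -/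
theorem aux_exists (n K : ℕ) (hn : 1 ≤ n) (hK : 1 ≤ K) (c : ℕ → ℤ) (S : ℤ)
    (h : ∀ i j : ℕ, 1 ≤ i → i ≤ n → 1 ≤ j → j ≤ n →
      ((i : ℝ) - j) * (S : ℝ) < K * ((c i : ℝ) - c j + 1)) :
    ∃ B' : ℤ, ∀ i : ℕ, 1 ≤ i → i ≤ n → ⌈((i : ℝ) * (S : ℝ) - (B' : ℝ)) / (K : ℝ)⌉ = c i := by
  obtain ⟨m, hm, hmax⟩ := Finset.exists_max_image (Finset.Icc 1 n)
    (fun i : ℕ => (i : ℤ) * S - K * c i) ⟨1, by simp [hn]⟩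
  rw [Finset.mem_Icc] at hm
  refine ⟨(m : ℤ) * S - K * c m, fun i h1 h2 => ?_⟩
  have hK' : (0 : ℝ) < K := by exact_mod_cast hK
  have h3 := hmax i (Finset.mem_Icc.2 ⟨h1, h2⟩)
  have h4 : (i : ℝ) * S - K * c i ≤ (m : ℝ) * S - K * c m := by exact_mod_cast h3
  have h5 := h m i hm.1 hm.2 h1 h2
  rw [Int.ceil_eq_iff, lt_div_iff₀ hK', div_le_iff₀ hK']
  push_cast
  constructor <;> nlinarith

theorem aux_conv (a x y z r : ℝ) (hx : a * x < r) (hz : a * z < r) (h1 : x ≤ y) (h2 : y ≤ z) :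
    a * y < r := by
  rcases le_total 0 a with ha | ha
  · exact (mul_le_mul_of_nonneg_left h2 ha).trans_lt hz
  · exact (mul_le_mul_of_nonpos_left h1 ha).trans_lt hx

/-- If some `T, B` work, then `T = ⌊t·K⌋` or `T = ⌈t·K⌉` works
with a suitable integer `B'`. -/
theorem stmt_11 (n K : ℕ) (hn : 1 ≤ n) (hK : 1 ≤ K) (t b : ℝ)
    (h : ∃ T B : ℤ, ∀ i : ℕ, 1 ≤ i → i ≤ n →
      ⌈((i : ℝ) * (T : ℝ) - (B : ℝ)) / (K : ℝ)⌉ = ⌈(i : ℝ) * t - b⌉) :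
    (∃ B' : ℤ, ∀ i : ℕ, 1 ≤ i → i ≤ n →
      ⌈((i : ℝ) * ((⌊t * (K : ℝ)⌋ : ℤ) : ℝ) - (B' : ℝ)) / (K : ℝ)⌉ = ⌈(i : ℝ) * t - b⌉) ∨
    (∃ B' : ℤ, ∀ i : ℕ, 1 ≤ i → i ≤ n →
      ⌈((i : ℝ) * ((⌈t * (K : ℝ)⌉ : ℤ) : ℝ) - (B' : ℝ)) / (K : ℝ)⌉ = ⌈(i : ℝ) * t - b⌉) := by
  obtain ⟨T, B, h⟩ := h
  have hK' : (0 : ℝ) < K := by exact_mod_cast hK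
  have hT : ∀ i j : ℕ, 1 ≤ i → i ≤ n → 1 ≤ j → j ≤ n →
      ((i : ℝ) - j) * (T : ℝ) < K * ((⌈(i : ℝ) * t - b⌉ : ℝ) - ⌈(j : ℝ) * t - b⌉ + 1) := by
    intro i j hi hi' hj hj'
    have h1 := (Int.ceil_eq_iff.1 (h i hi hi')).2
    have h2 := (Int.ceil_eq_iff.1 (h j hj hj')).1
    rw [div_le_iff₀ hK'] at h1
    rw [lt_div_iff₀ hK'] at h2
    nlinarith
  have ht : ∀ i j : ℕ, 1 ≤ i → i ≤ n → 1 ≤ j → j ≤ n →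
      ((i : ℝ) - j) * (t * K) < K * ((⌈(i : ℝ) * t - b⌉ : ℝ) - ⌈(j : ℝ) * t - b⌉ + 1) := by
    intro i j _ _ _ _
    have h1 := Int.le_ceil ((i : ℝ) * t - b)
    have h2 := Int.ceil_lt_add_one ((j : ℝ) * t - b)
    have h3 : ((i : ℝ) - j) * t < (⌈(i : ℝ) * t - b⌉ : ℝ) - ⌈(j : ℝ) * t - b⌉ + 1 := by linarith
    nlinarith [mul_lt_mul_of_pos_left h3 hK']
  rcases le_total (T : ℝ) (t * K) with hle | hle
  · left
    refine aux_exists n K hn hK (fun i => ⌈(i : ℝ) * t - b⌉) _ fun i j hi hi' hj hj' => ?_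
    exact aux_conv _ _ _ _ _ (hT i j hi hi' hj hj') (ht i j hi hi' hj hj')
      (by exact_mod_cast Int.le_floor.2 hle) (Int.floor_le _)
  · right
    refine aux_exists n K hn hK (fun i => ⌈(i : ℝ) * t - b⌉) _ fun i j hi hi' hj hj' => ?_
    exact aux_conv _ _ _ _ _ (ht i j hi hi' hj hj') (hT i j hi hi' hj hj')
      (Int.le_ceil _) (by exact_mod_cast Int.ceil_le.2 hle)
end

section
/- Let n ≥ 2 and K ≥ 1 be natural numbers, let t, b be real numbers, and let T, B be integers such that ⌈(i·T − B)/K⌉ = ⌈i·t − b⌉ for all i ∈ {1, …, n}. Then K·t − 2·K/(n − 1) < T < K·t + 2·K/(n − 1). -/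
/-- Range of valid `T`: `Kt − 2K/(n−1) < T < Kt + 2K/(n−1)`. -/
theorem stmt_13 (n K : ℕ) (hn : 2 ≤ n) (hK : 1 ≤ K) (t b : ℝ) (T B : ℤ)
    (h : ∀ i : ℕ, 1 ≤ i → i ≤ n →
      ⌈((i : ℝ) * (T : ℝ) - (B : ℝ)) / (K : ℝ)⌉ = ⌈(i : ℝ) * t - b⌉) :
    (K : ℝ) * t - 2 * (K : ℝ) / ((n : ℝ) - 1) < (T : ℝ) ∧
    (T : ℝ) < (K : ℝ) * t + 2 * (K : ℝ) / ((n : ℝ) - 1) := by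
  have hK0 : (0:ℝ) < K := by exact_mod_cast hK
  have hn0 : (0:ℝ) < (n:ℝ) - 1 := by
    have : (2:ℝ) ≤ n := by exact_mod_cast hn
    linarith
  have h1 := h 1 le_rfl (by omega)
  have h2 := h n (by omega) le_rfl
  obtain ⟨s, hs⟩ : ∃ s : ℝ, (T:ℝ) = K * s := ⟨T / K, by field_simp⟩
  obtain ⟨c, hc⟩ : ∃ c : ℝ, (B:ℝ) = K * c := ⟨B / K, by field_simp⟩
  have e : ∀ x : ℝ, (x * (T:ℝ) - B) / K = x * s - c := by
    intro x
    rw [hs, hc]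
    field_simp
  rw [e] at h1 h2
  have a1 := Int.le_ceil (((1:ℕ):ℝ) * s - c)
  have a2 := Int.ceil_lt_add_one (((1:ℕ):ℝ) * s - c)
  have a3 := Int.le_ceil ((n:ℝ) * s - c)
  have a4 := Int.ceil_lt_add_one ((n:ℝ) * s - c)
  have b1 := Int.le_ceil (((1:ℕ):ℝ) * t - b)
  have b2 := Int.ceil_lt_add_one (((1:ℕ):ℝ) * t - b)
  have b3 := Int.le_ceil ((n:ℝ) * t - b)
  have b4 := Int.ceil_lt_add_one ((n:ℝ) * t - b)
  rw [h1] at a1 a2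
  rw [h2] at a3 a4
  push_cast at a1 a2 b1 b2
  have u : s - t < 2 / ((n:ℝ) - 1) := by
    rw [lt_div_iff₀ hn0]
    linarith
  have l : t - s < 2 / ((n:ℝ) - 1) := by
    rw [lt_div_iff₀ hn0]
    linarith
  have u' := mul_lt_mul_of_pos_left u hK0
  have l' := mul_lt_mul_of_pos_left l hK0
  have q : 2 * (K:ℝ) / ((n:ℝ) - 1) = K * (2 / ((n:ℝ) - 1)) := by ring
  rw [q, hs]
  constructor <;> linarith
end

section
/- Let n ≥ 2 and K ≥ 1 be natural numbers, let t, b be real numbers, and let T, B be integers such that ⌈(i·T − B)/K⌉ = ⌈i·t − b⌉ for all i ∈ {1, …, n}. Then K·b − K·(n + 1)/(n − 1) < B < K·b + K·(n + 1)/(n − 1). -/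
/-- Range of valid `B`: `Kb − K(n+1)/(n−1) < B < Kb + K(n+1)/(n−1)`. -/
theorem stmt_14 (n K : ℕ) (hn : 2 ≤ n) (hK : 1 ≤ K) (t b : ℝ) (T B : ℤ)
    (h : ∀ i : ℕ, 1 ≤ i → i ≤ n →
      ⌈((i : ℝ) * (T : ℝ) - (B : ℝ)) / (K : ℝ)⌉ = ⌈(i : ℝ) * t - b⌉) :
    (K : ℝ) * b - (K : ℝ) * ((n : ℝ) + 1) / ((n : ℝ) - 1) < (B : ℝ) ∧
    (B : ℝ) < (K : ℝ) * b + (K : ℝ) * ((n : ℝ) + 1) / ((n : ℝ) - 1) := by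
  have hK' : (0 : ℝ) < K := by exact_mod_cast hK
  have hn' : (2 : ℝ) ≤ n := by exact_mod_cast hn
  have hn1 : (0 : ℝ) < (n : ℝ) - 1 := by linarith
  have key : ∀ i : ℕ, 1 ≤ i → i ≤ n →
      ((i : ℝ) * T - B) - K * (i * t - b) < K ∧
      K * (i * t - b) - ((i : ℝ) * T - B) < K := by
    intro i h1 h2
    have e := h i h1 h2
    have a1 := Int.le_ceil (((i : ℝ) * (T : ℝ) - (B : ℝ)) / (K : ℝ))
    have a2 := Int.ceil_lt_add_one (((i : ℝ) * (T : ℝ) - (B : ℝ)) / (K : ℝ))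
    have a3 := Int.le_ceil ((i : ℝ) * t - b)
    have a4 := Int.ceil_lt_add_one ((i : ℝ) * t - b)
    rw [e] at a1 a2
    have c1 := lt_of_le_of_lt a1 a4
    have c2 := lt_of_le_of_lt a3 a2
    rw [div_lt_iff₀ hK'] at c1
    rw [← sub_lt_iff_lt_add, lt_div_iff₀ hK'] at c2
    constructor <;> linarith
  obtain ⟨p1, p2⟩ := key 1 le_rfl (by omega)
  obtain ⟨q1, q2⟩ := key n (by omega) le_rfl
  have m1 := mul_lt_mul_of_pos_left p1 (by linarith : (0 : ℝ) < n)
  have m2 := mul_lt_mul_of_pos_left p2 (by linarith : (0 : ℝ) < n)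
  push_cast at m1 m2
  constructor
  · rw [sub_lt_comm, lt_div_iff₀ hn1]
    linarith
  · rw [← sub_lt_iff_lt_add', lt_div_iff₀ hn1]
    linarith
end

section
/- Let Y_min and Y_max be integers with Y_min < Y_max, let K be a natural number with K ≥ 1, let t and b be real numbers with t > 0, and let T and B be integers with T > 0. Then the following are equivalent: (i) for every integer N, clip(⌊(N + b)/t⌋, Y_min, Y_max) = clip(⌊(N·K + B)/T⌋, Y_min, Y_max); (ii) for every integer i with Y_min + 1 ≤ i ≤ Y_max, ⌈i·t − b⌉ = ⌈(i·T − B)/K⌉. -/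
/-- General quantizer range `[Y_min, Y_max]`: the clipped floor
formulation is equivalent to the ceiling condition for `i ∈ {Y_min+1, …, Y_max}`.
`clip x a b = min (max x a) b`. -/
theorem stmt_16 (Ymin Ymax : ℤ) (hY : Ymin < Ymax) (K : ℕ) (hK : 1 ≤ K)
    (t b : ℝ) (ht : 0 < t) (T B : ℤ) (hT : 0 < T) :
    (∀ N : ℤ, min (max (⌊((N : ℝ) + b) / t⌋) Ymin) Ymax
        = min (max (⌊((N : ℝ) * (K : ℝ) + (B : ℝ)) / (T : ℝ)⌋) Ymin) Ymax) ↔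
    (∀ i : ℤ, Ymin + 1 ≤ i → i ≤ Ymax →
        ⌈(i : ℝ) * t - b⌉ = ⌈((i : ℝ) * (T : ℝ) - (B : ℝ)) / (K : ℝ)⌉) := by
  have hKr : (0 : ℝ) < (K : ℝ) := by exact_mod_cast hK
  have hTr : (0 : ℝ) < (T : ℝ) := by exact_mod_cast hT
  have h1 : ∀ i N : ℤ, i ≤ ⌊((N : ℝ) + b) / t⌋ ↔ ⌈(i : ℝ) * t - b⌉ ≤ N := by
    intro i N
    rw [Int.le_floor, Int.ceil_le, le_div_iff₀ ht, sub_le_iff_le_add]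
  have h2 : ∀ i N : ℤ, i ≤ ⌊((N : ℝ) * (K : ℝ) + (B : ℝ)) / (T : ℝ)⌋ ↔
      ⌈((i : ℝ) * (T : ℝ) - (B : ℝ)) / (K : ℝ)⌉ ≤ N := by
    intro i N
    rw [Int.le_floor, Int.ceil_le, le_div_iff₀ hTr, div_le_iff₀ hKr, sub_le_iff_le_add]
  constructor
  · intro h i hi1 hi2
    have key : ∀ N : ℤ, ⌈(i : ℝ) * t - b⌉ ≤ N ↔
        ⌈((i : ℝ) * (T : ℝ) - (B : ℝ)) / (K : ℝ)⌉ ≤ N := by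
      intro N
      rw [← h1, ← h2]
      have := h N
      omega
    exact le_antisymm ((key _).2 le_rfl) ((key _).1 le_rfl)
  · intro h N
    have key : ∀ i : ℤ, Ymin + 1 ≤ i → i ≤ Ymax → (i ≤ ⌊((N : ℝ) + b) / t⌋ ↔
        i ≤ ⌊((N : ℝ) * (K : ℝ) + (B : ℝ)) / (T : ℝ)⌋) := by
      intro i hi1 hi2
      rw [h1, h2, h i hi1 hi2]
    generalize ⌊((N : ℝ) + b) / t⌋ = f at *
    generalize ⌊((N : ℝ) * (K : ℝ) + (B : ℝ)) / (T : ℝ)⌋ = g at *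
    have k1 := key (min (max f Ymin) Ymax)
    have k2 := key (min (max g Ymin) Ymax)
    omega
end

section
/- Let A be a natural number with A ≥ 2 and let t, b be real numbers with t > 0, t − b not an integer, and ⌈t − b⌉ = ⌈A·t − b⌉. Then (A − 1)·t < 1, and for every integer N: if N ≥ ⌈t − b⌉ then clip(⌊(N + b)/t⌋, 0, A) = A, while if N < ⌈t − b⌉ then clip(⌊(N + b)/t⌋, 0, A) = 0. -/
/-- If `t > 0`, `t − b` is not an integer and `⌈t−b⌉ = ⌈At−b⌉`
with `A ≥ 2`, then `(A−1)t < 1` and the clipped output is the binary function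
`A·sign(N − N₀)` with `N₀ = ⌈t−b⌉ − 1`. -/
theorem stmt_17 (A : ℕ) (hA : 2 ≤ A) (t b : ℝ) (ht : 0 < t)
    (hint : ∀ z : ℤ, t - b ≠ (z : ℝ))
    (hceil : ⌈t - b⌉ = ⌈(A : ℝ) * t - b⌉) :
    ((A : ℝ) - 1) * t < 1 ∧
    ∀ N : ℤ,
      (⌈t - b⌉ ≤ N → min (max (⌊((N : ℝ) + b) / t⌋) 0) (A : ℤ) = (A : ℤ)) ∧
      (N < ⌈t - b⌉ → min (max (⌊((N : ℝ) + b) / t⌋) 0) (A : ℤ) = 0) := by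
  have h1 : (A : ℝ) * t - b ≤ (⌈t - b⌉ : ℝ) := by
    rw [hceil]; exact Int.le_ceil _
  have h2 : (⌈t - b⌉ : ℝ) < t - b + 1 := Int.ceil_lt_add_one _
  refine ⟨by linarith, fun N => ⟨fun hN => ?_, fun hN => ?_⟩⟩
  · have h3 : (⌈t - b⌉ : ℝ) ≤ (N : ℝ) := by exact_mod_cast hN
    have h4 : (A : ℤ) ≤ ⌊((N : ℝ) + b) / t⌋ := by
      rw [Int.le_floor, le_div_iff₀ ht]
      push_cast
      linarith
    omega
  · have h3 : (N : ℝ) < t - b := Int.lt_ceil.mp hN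
    have h4 : ⌊((N : ℝ) + b) / t⌋ < 1 := by
      rw [Int.floor_lt, div_lt_iff₀ ht]
      push_cast
      linarith
    omega
end

section
/- Let n be a natural number with n > 4, let t and b be real numbers with 0 ≤ t < 1 and ⌈t − b⌉ = 1, and set Sᵢ = ⌈i·t − b⌉ for i ∈ {1, …, n}. Then for all i, j, l, m ∈ {1, …, n} with i > j and l > m, (S_l − S_m + 1)/(l − m) − (Sᵢ − Sⱼ − 1)/(i − j) ≥ 2/((n − 1)·(n − 3)). -/
theorem aux_F1 (D q r N : ℤ) (hN : 4 ≤ N) (hq : 0 < q) (hr : 0 < r) (hD : 1 ≤ D)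
    (h : q + r ≤ N) : 2 * (q * r) ≤ D * (N * (N - 2)) := by
  have h1 : 4 * (q * r) ≤ N * N := by nlinarith [sq_nonneg (q - r)]
  have h2 : 0 ≤ N * (N - 4) := mul_nonneg (by omega) (by omega)
  have h3 : 0 ≤ N * (N - 2) := mul_nonneg (by omega) (by omega)
  have h4 := mul_nonneg (sub_nonneg.2 hD) h3
  linarith

theorem aux_F2 (D q r N : ℤ) (hN : 4 ≤ N) (hD : 2 ≤ D)
    (h : q * r ≤ N * (N - 2)) : 2 * (q * r) ≤ D * (N * (N - 2)) := by
  have h3 : 0 ≤ N * (N - 2) := mul_nonneg (by omega) (by omega)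
  have h4 := mul_nonneg (sub_nonneg.2 hD) h3
  linarith

theorem aux_F3 (D q r N : ℤ) (hN : 4 ≤ N) (hq : 0 < q) (hr : 0 < r) (hD : q ≤ D)
    (h : r ≤ N) : 2 * (q * r) ≤ D * (N * (N - 2)) := by
  have h3 : 0 ≤ N * (N - 2) := mul_nonneg (by omega) (by omega)
  have h4 := mul_nonneg (sub_nonneg.2 hD) h3
  have h5 : 2 * r ≤ N * (N - 2) := by nlinarith
  have h6 := mul_nonneg hq.le (sub_nonneg.2 h5)
  linarith

theorem aux_cross (a o c X O Y N : ℤ) (hN : 4 ≤ N) (ha : 0 < a) (ho : 0 < o) (hc : 0 < c)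
    (hs : a + o + c ≤ N)
    (hD : 1 ≤ (X + O + 1) * (o + c) - (O + Y - 1) * (a + o))
    (h1 : 1 ≤ (X + 1) * (o + c) - (O + Y - 1) * a)
    (h2 : 1 ≤ (X + O + 1) * c - (Y - 1) * (a + o)) :
    2 * ((a + o) * (o + c)) ≤
      ((X + O + 1) * (o + c) - (O + Y - 1) * (a + o)) * (N * (N - 2)) := by
  have hD2 : 2 ≤ (X + O + 1) * (o + c) - (O + Y - 1) * (a + o) := by
    by_contra hlt
    have hD1 : (X + O + 1) * (o + c) - (O + Y - 1) * (a + o) = 1 := by omega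
    have e : a * ((X + O + 1) * (o + c) - (O + Y - 1) * (a + o)) =
        ((X + 1) * (o + c) - (O + Y - 1) * a) * (a + o) +
        (((X + O + 1) * c - (Y - 1) * (a + o)) -
          ((X + O + 1) * (o + c) - (O + Y - 1) * (a + o))) * (o + c) := by ring
    rw [hD1] at e
    nlinarith [mul_nonneg (sub_nonneg.2 h1) (by omega : 0 ≤ a + o),
      mul_nonneg (sub_nonneg.2 h2) (by omega : 0 ≤ o + c)]
  rcases lt_trichotomy a c with h | h | h
  · apply aux_F2 _ _ _ _ hN hD2
    nlinarith [mul_nonneg (by omega : 0 ≤ N - 2 - (a + o)) (by omega : 0 ≤ o + c)]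
  · subst h
    apply aux_F3 _ _ _ _ hN (by omega) (by omega) _ (by omega)
    have e : (X + O + 1) * (o + a) - (O + Y - 1) * (a + o) = (X - Y + 2) * (a + o) := by ring
    rw [e] at hD ⊢
    have : 0 < X - Y + 2 := by
      by_contra hh
      nlinarith
    nlinarith
  · apply aux_F2 _ _ _ _ hN hD2
    nlinarith [mul_nonneg (by omega : 0 ≤ N - 2 - (o + c)) (by omega : 0 ≤ a + o)]

theorem aux_main (N : ℤ) (hN : 4 ≤ N) (n : ℕ) (hn : (n : ℤ) = N + 1) (S : ℕ → ℤ)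
    (cr : ∀ x y u v : ℕ, 1 ≤ x → x ≤ y → y ≤ n → 1 ≤ u → u ≤ v → v ≤ n → (x < y ∨ u < v) →
      1 ≤ (S y - S x + 1) * ((v : ℤ) - u) - (S v - S u - 1) * ((y : ℤ) - x))
    (i j l m : ℕ) (hj : 1 ≤ j) (hji : j < i) (hi : i ≤ n) (hm : 1 ≤ m) (hml : m < l)
    (hl : l ≤ n) :
    2 * (((l : ℤ) - m) * ((i : ℤ) - j)) ≤
      ((S l - S m + 1) * ((i : ℤ) - j) - (S i - S j - 1) * ((l : ℤ) - m)) * (N * (N - 2)) := by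
  have hD := cr m l j i hm hml.le hl hj hji.le hi (Or.inl hml)
  by_cases d1 : l ≤ j
  · exact aux_F1 _ _ _ _ hN (by omega) (by omega) hD (by omega)
  by_cases d2 : i ≤ m
  · exact aux_F1 _ _ _ _ hN (by omega) (by omega) hD (by omega)
  by_cases c1 : m ≤ j ∧ i ≤ l
  · obtain ⟨c1, c2⟩ := c1
    have A := cr m j j i hm c1 (by omega) hj hji.le hi (Or.inr hji)
    have C := cr i l j i (by omega) c2 hl hj hji.le hi (Or.inr hji)
    by_cases z : m = j ∨ i = l
    · rw [mul_comm ((l : ℤ) - m) ((i : ℤ) - j)]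
      apply aux_F3 _ _ _ _ hN (by omega) (by omega) _ (by omega)
      rcases z with z | z <;> subst z <;> linarith
    · apply aux_F2 _ _ _ _ hN (by linarith)
      have : (i : ℤ) - j ≤ N - 2 := by omega
      have : (l : ℤ) - m ≤ N := by omega
      exact mul_le_mul (by omega) (by omega) (by omega) (by omega)
  by_cases c2 : j ≤ m ∧ l ≤ i
  · obtain ⟨c1, c2⟩ := c2
    have A := cr m l j m hm hml.le hl hj c1 (by omega) (Or.inl hml)
    have C := cr m l l i hm hml.le hl (by omega) c2 hi (Or.inl hml)
    by_cases z : j = m ∨ l = i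
    · apply aux_F3 _ _ _ _ hN (by omega) (by omega) _ (by omega)
      rcases z with z | z <;> subst z <;> linarith
    · apply aux_F2 _ _ _ _ hN (by linarith)
      rw [mul_comm]
      exact mul_le_mul (by omega) (by omega) (by omega) (by omega)
  by_cases c3 : m < j
  · have A := cr m j j i hm c3.le (by omega) hj hji.le hi (Or.inr hji)
    have C := cr m l l i hm hml.le hl (by omega) (by omega) hi (Or.inl hml)
    have := aux_cross ((j : ℤ) - m) ((l : ℤ) - j) ((i : ℤ) - l) (S j - S m) (S l - S j)
      (S i - S l) N hN (by omega) (by omega) (by omega) (by omega)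
      (by linarith) (by linarith) (by linarith)
    convert this using 2 <;> ring
  · have A := cr i l j i (by omega) (by omega) hl hj hji.le hi (Or.inr hji)
    have C := cr m l j m hm hml.le hl hj (by omega) (by omega) (Or.inl hml)
    have := aux_cross ((l : ℤ) - i) ((i : ℤ) - m) ((m : ℤ) - j) (S l - S i) (S i - S m)
      (S m - S j) N hN (by omega) (by omega) (by omega) (by omega)
      (by linarith) (by linarith) (by linarith)
    convert this using 2 <;> ring

/-- For `n > 4`, `0 ≤ t < 1`, `⌈t−b⌉ = 1` and `Sᵢ = ⌈i·t − b⌉`,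
for all `i > j`, `l > m` in `{1, …, n}`:
`(S_l − S_m + 1)/(l−m) − (Sᵢ − Sⱼ − 1)/(i−j) ≥ 2/((n−1)(n−3))`. -/
theorem stmt_18 (n : ℕ) (hn : 4 < n) (t b : ℝ) (ht0 : 0 ≤ t) (ht1 : t < 1)
    (htb : ⌈t - b⌉ = 1)
    (S : ℕ → ℤ) (hS : ∀ i : ℕ, 1 ≤ i → i ≤ n → S i = ⌈(i : ℝ) * t - b⌉) :
    ∀ i j l m : ℕ, 1 ≤ j → j < i → i ≤ n → 1 ≤ m → m < l → l ≤ n →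
      2 / (((n : ℝ) - 1) * ((n : ℝ) - 3)) ≤
        ((S l : ℝ) - (S m : ℝ) + 1) / ((l : ℝ) - (m : ℝ)) -
        ((S i : ℝ) - (S j : ℝ) - 1) / ((i : ℝ) - (j : ℝ)) := by
  intro i j l m hj hji hi hm hml hl
  have cr : ∀ x y u v : ℕ, 1 ≤ x → x ≤ y → y ≤ n → 1 ≤ u → u ≤ v → v ≤ n → (x < y ∨ u < v) →
      1 ≤ (S y - S x + 1) * ((v : ℤ) - u) - (S v - S u - 1) * ((y : ℤ) - x) := by
    intro x y u v hx hxy hy hu huv hv hor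
    have hlo : ∀ k : ℕ, 1 ≤ k → k ≤ n → (k : ℝ) * t - b ≤ S k := fun k h1 h2 => by
      rw [hS k h1 h2]; exact Int.le_ceil _
    have hhi : ∀ k : ℕ, 1 ≤ k → k ≤ n → (S k : ℝ) < (k : ℝ) * t - b + 1 := fun k h1 h2 => by
      rw [hS k h1 h2]; exact Int.ceil_lt_add_one _
    have a1 := hlo y (by omega) hy
    have a2 := hhi x hx (by omega)
    have a3 := hhi v (by omega) hv
    have a4 := hlo u hu (by omega)
    have P1 : 0 < (S y : ℝ) - S x + 1 - ((y : ℝ) - x) * t := by linarith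
    have P2 : 0 < ((v : ℝ) - u) * t - ((S v : ℝ) - S u - 1) := by linarith
    have hxy' : (0 : ℝ) ≤ (y : ℝ) - x := sub_nonneg.2 (by exact_mod_cast hxy)
    have huv' : (0 : ℝ) ≤ (v : ℝ) - u := sub_nonneg.2 (by exact_mod_cast huv)
    have key : (0 : ℝ) < ((S y : ℝ) - S x + 1) * ((v : ℝ) - u)
        - ((S v : ℝ) - S u - 1) * ((y : ℝ) - x) := by
      rcases hor with h | h
      · have h' : (0 : ℝ) < (y : ℝ) - x := sub_pos.2 (by exact_mod_cast h)
        have := mul_nonneg P1.le huv'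
        have := mul_pos P2 h'
        linarith
      · have h' : (0 : ℝ) < (v : ℝ) - u := sub_pos.2 (by exact_mod_cast h)
        have := mul_pos P1 h'
        have := mul_nonneg P2.le hxy'
        linarith
    have : (0 : ℤ) < (S y - S x + 1) * ((v : ℤ) - u) - (S v - S u - 1) * ((y : ℤ) - x) := by
      exact_mod_cast key
    omega
  have M := aux_main ((n : ℤ) - 1) (by omega) n (by ring) S cr i j l m hj hji hi hm hml hl
  have M' : 2 * (((l : ℝ) - m) * ((i : ℝ) - j)) ≤
      (((S l : ℝ) - S m + 1) * ((i : ℝ) - j) - ((S i : ℝ) - S j - 1) * ((l : ℝ) - m)) *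
        (((n : ℝ) - 1) * ((n : ℝ) - 1 - 2)) := by
    exact_mod_cast M
  have hq : (0 : ℝ) < (l : ℝ) - m := sub_pos.2 (by exact_mod_cast hml)
  have hr : (0 : ℝ) < (i : ℝ) - j := sub_pos.2 (by exact_mod_cast hji)
  have hn' : (4 : ℝ) < n := by exact_mod_cast hn
  have hp : (0 : ℝ) < ((n : ℝ) - 1) * ((n : ℝ) - 3) := mul_pos (by linarith) (by linarith)
  rw [div_sub_div _ _ hq.ne' hr.ne', div_le_div_iff₀ hp (mul_pos hq hr)]
  linarith
end
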